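/- For every integer n ≥ 1 and all complex numbers α, β, γ with Re α > −1, Re β > −1 and Re γ > 0, the integral S_n(α,β,γ) over the ordered simplex Δ_n converges absolutely, and S_n(α,β,γ) = (1/n!) · ∏_{i=1}^{n} [Γ(1+iγ) · Γ(1+α+(i−1)γ) · Γ(1+β+(i−1)γ)] / [Γ(1+γ) · Γ(2+α+β+(n+i−2)γ)]. -/

import Mathlib

open MeasureTheory Complex

noncomputable section

/-- The open ordered simplex `Δ_n = {y : 1 > y_1 > ⋯ > y_n > 0}`. -/
def orderedSimplex (n : ℕ) : Set (Fin n → ℝ) :=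
  {y | (∀ i, 0 < y i ∧ y i < 1) ∧ ∀ i j : Fin n, i < j → y j < y i}

/-- The Selberg integrand `∏ y_i^α (1-y_i)^β ∏_{i<j} (y_i-y_j)^{2γ} · f(y)`,
where complex powers of the (positive) real bases are principal powers. -/
def selbergIntegrand (n : ℕ) (f : (Fin n → ℝ) → ℂ) (α β γ : ℂ) (y : Fin n → ℝ) : ℂ :=
  (∏ i, ((y i : ℂ) ^ α * (((1 - y i : ℝ)) : ℂ) ^ β)) *
    (∏ i : Fin n, ∏ j : Fin n,
      if i < j then (((y i - y j : ℝ)) : ℂ) ^ (2 * γ) else 1) * f y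

/-- The Selberg integral `S_n[f](α,β,γ)`. -/
def selbergS (n : ℕ) (f : (Fin n → ℝ) → ℂ) (α β γ : ℂ) : ℂ :=
  ∫ y in orderedSimplex n, selbergIntegrand n f α β γ y

/-!
The proof is Anderson's. Fix nodes `a_0 > ⋯ > a_m` and put `A = ∏_k (X - a_k)`. Sending `(r, t)`,
with `r > 0` and `t` interlacing `a`, to the residues `w_j = r ∏_i (a_j - t_i) / A'(a_j)` of
`r ∏_i (z - t_i) / A(z)` is a bijection onto the positive orthant with `∑_j w_j = r` and with a
Jacobian that is a quotient of Vandermonde products. In these coordinates the integral of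
`∏_j e^{-w_j} w_j^{s_j - 1}`, which is `∏_j Γ(s_j)`, splits into `Γ(∑_j s_j)` and an integral over
`t`; this is the Dixon–Anderson integral.

Integrate one kernel over all pairs `(x, y)` with `y ∈ Δ_{m+1}` and `x` interlacing `y`.
Equivalently `x ∈ Δ_m` and `y` interlaces `1, x_1, …, x_m, 0`, so both inner integrals are of
Dixon–Anderson type, and comparing the two orders of integration expresses `S_{m+1}(α, β, γ)`
through `S_m(α + γ, β + γ, γ)`. The norm of the kernel is the kernel at the real parts of the
exponents, so absolute convergence follows from the same recursion.
-/

section Vandermonde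

open Finset Polynomial Lagrange

/-- The product `∏_{k ≠ j} (a_j - a_k)`, which is the value `A'(a_j)` of the derivative of the
nodal polynomial `A = ∏_k (X - a_k)`. -/
def nodalDeriv {ι R : Type*} [Fintype ι] [DecidableEq ι] [CommRing R] (a : ι → R) (j : ι) : R :=
  ∏ k ∈ univ.erase j, (a j - a k)

lemma nodalDeriv_eq_prod_ite {ι R : Type*} [Fintype ι] [DecidableEq ι] [CommRing R]
    (a : ι → R) (j : ι) : nodalDeriv a j = ∏ k, if j = k then 1 else a j - a k := by
  rw [nodalDeriv, ← prod_erase univ (a := j) (by simp)]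
  exact prod_congr rfl fun k hk ↦ (if_neg (ne_of_mem_erase hk).symm).symm

lemma nodalDeriv_eq_prod_succAbove {R : Type*} [CommRing R] {m : ℕ} (a : Fin (m + 1) → R)
    (j : Fin (m + 1)) : nodalDeriv a j = ∏ i, (a j - a (j.succAbove i)) := by
  rw [nodalDeriv, Fin.univ_succAbove m j, erase_cons, prod_map]
  rfl

lemma nodalDeriv_ne_zero {ι R : Type*} [Fintype ι] [DecidableEq ι] [CommRing R] [IsDomain R]
    {a : ι → R} (ha : a.Injective) (j : ι) : nodalDeriv a j ≠ 0 :=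
  prod_ne_zero_iff.2 fun _ hk ↦ sub_ne_zero.2 fun h ↦ ne_of_mem_erase hk (ha h).symm

/-- The absolute value `∏_{i<j} |a_i - a_j|` of the Vandermonde determinant. -/
def absVandermonde {n : ℕ} (a : Fin n → ℝ) : ℝ := |(Matrix.vandermonde a).det|

lemma absVandermonde_eq_prod_Ioi {n : ℕ} (a : Fin n → ℝ) :
    absVandermonde a = ∏ i, ∏ j ∈ Ioi i, |a i - a j| := by
  simp only [absVandermonde, Matrix.det_vandermonde, abs_prod, abs_sub_comm]

lemma absVandermonde_nonneg {n : ℕ} (a : Fin n → ℝ) : 0 ≤ absVandermonde a :=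
  abs_nonneg _

lemma absVandermonde_pos {n : ℕ} {a : Fin n → ℝ} (ha : a.Injective) : 0 < absVandermonde a :=
  abs_pos.2 (Matrix.det_vandermonde_ne_zero_iff.2 ha)

lemma absVandermonde_cons {m : ℕ} (z : ℝ) (t : Fin m → ℝ) :
    absVandermonde (Fin.cons z t : Fin (m + 1) → ℝ) = (∏ i, |z - t i|) * absVandermonde t := by
  simp only [absVandermonde_eq_prod_Ioi, Fin.prod_univ_succ, Fin.prod_Ioi_zero, Fin.prod_Ioi_succ,
    Fin.cons_zero, Fin.cons_succ]

lemma prod_abs_nodalDeriv {n : ℕ} (a : Fin n → ℝ) :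
    ∏ j, |nodalDeriv a j| = absVandermonde a ^ 2 := by
  calc ∏ j, |nodalDeriv a j| = ∏ j, ∏ k ∈ {j}ᶜ, |a j - a k| := by
        simp only [nodalDeriv, abs_prod, ← compl_singleton]
    _ = ∏ i, ∏ j ∈ Ioi i, |a i - a j| * |a j - a i| :=
        (prod_prod_Ioi_mul_eq_prod_prod_off_diag fun i j ↦ |a j - a i|).symm
    _ = absVandermonde a ^ 2 := by
        simp only [absVandermonde_eq_prod_Ioi, sq, abs_sub_comm, prod_mul_distrib]

lemma det_eval_mul_det_vandermonde {R : Type*} [CommRing R] {n : ℕ} (p : Fin n → R[X])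
    (hp : ∀ j, (p j).natDegree < n) (v w : Fin n → R) :
    (Matrix.of fun i j ↦ (p j).eval (v i)).det * (Matrix.vandermonde w).det =
      (Matrix.of fun i j ↦ (p j).eval (w i)).det * (Matrix.vandermonde v).det := by
  have factor (u : Fin n → R) : (Matrix.of fun i j ↦ (p j).eval (u i)) =
      Matrix.vandermonde u * Matrix.of fun (k j : Fin n) ↦ (p j).coeff k := by
    ext i j
    simp only [Matrix.of_apply, Matrix.mul_apply, Matrix.vandermonde_apply,
      eval_eq_sum_range' (hp j), ← Fin.sum_univ_eq_sum_range, mul_comm]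
  rw [factor v, factor w, Matrix.det_mul, Matrix.det_mul]
  ring

/-- The polynomials `Q, Q/(X - t_1), …, Q/(X - t_m)` for `Q = ∏_i (X - t_i)`; up to sign they are
the partial derivatives of `r Q` at `r = 1` with respect to `r, t_1, …, t_m`. -/
def nodalBasis {R : Type*} [CommRing R] {m : ℕ} (t : Fin m → R) : Fin (m + 1) → R[X] :=
  Fin.cons (nodal univ t) fun i ↦ nodal (univ.erase i) t

lemma natDegree_nodalBasis_lt {R : Type*} [CommRing R] [Nontrivial R] {m : ℕ} (t : Fin m → R)
    (j : Fin (m + 1)) : (nodalBasis t j).natDegree < m + 1 := by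
  cases j using Fin.cases <;> simp [nodalBasis]

lemma det_eval_nodalBasis_cons {R : Type*} [CommRing R] {m : ℕ} (z : R) (t : Fin m → R) :
    (Matrix.of fun i j ↦ (nodalBasis t j).eval ((Fin.cons z t : Fin (m + 1) → R) i)).det =
      (∏ i, (z - t i)) * ∏ i, nodalDeriv t i := by
  rw [Matrix.det_of_isUpperTriangular, Fin.prod_univ_succ]
  · simp [nodalBasis, eval_nodal, nodalDeriv]
  · intro i j hij
    induction i using Fin.cases with
    | zero => simp at hij
    | succ i =>
      induction j using Fin.cases with
      | zero => simpa [nodalBasis] using eval_nodal_at_node (mem_univ i)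
      | succ j =>
        have hji : j < i := by simpa using hij
        simpa [nodalBasis] using eval_nodal_at_node (mem_erase.2 ⟨hji.ne', mem_univ i⟩)

lemma abs_det_eval_nodalBasis {m : ℕ} (a : Fin (m + 1) → ℝ) {t : Fin m → ℝ} (ht : t.Injective) :
    |(Matrix.of fun i j ↦ (nodalBasis t j).eval (a i)).det| =
      absVandermonde a * absVandermonde t := by
  obtain ⟨z, hz⟩ : ∃ z, z ∉ Set.range t := (Set.finite_range t).exists_notMem
  have hcons : (Fin.cons z t : Fin (m + 1) → ℝ).Injective := Fin.cons_injective_iff.2 ⟨hz, ht⟩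
  have hdet := congrArg abs
    (det_eval_mul_det_vandermonde _ (natDegree_nodalBasis_lt t) a (Fin.cons z t))
  rw [det_eval_nodalBasis_cons, abs_mul, abs_mul, abs_mul, abs_prod, abs_prod,
    prod_abs_nodalDeriv] at hdet
  refine mul_right_cancel₀ (absVandermonde_pos hcons).ne' (hdet.trans ?_)
  rw [absVandermonde_cons, ← absVandermonde]
  ring

end Vandermonde

section Interlacing

open Set

variable {m : ℕ} {a : Fin (m + 1) → ℝ} {t : Fin m → ℝ}

/-- The sequences `t` interlacing `a`: `a_0 > t_0 > a_1 > t_1 > ⋯ > t_{m-1} > a_m`. -/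
def interlacing (a : Fin (m + 1) → ℝ) : Set (Fin m → ℝ) :=
  {t | ∀ i, t i ∈ Ioo (a i.succ) (a i.castSucc)}

lemma isOpen_interlacing (a : Fin (m + 1) → ℝ) : IsOpen (interlacing a) := by
  simp only [interlacing, ofPred_forall]
  exact isOpen_iInter_of_finite fun i ↦ isOpen_Ioo.preimage (continuous_apply i)

lemma measurableSet_Ioi_prod_interlacing (a : Fin (m + 1) → ℝ) :
    MeasurableSet (Ioi (0 : ℝ) ×ˢ interlacing a) :=
  measurableSet_Ioi.prod (isOpen_interlacing a).measurableSet

lemma strictAnti_nodes_of_mem_interlacing (ht : t ∈ interlacing a) : StrictAnti a :=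
  Fin.strictAnti_iff_succ_lt.2 fun i ↦ (ht i).1.trans (ht i).2

lemma strictAnti_of_mem_interlacing (ht : t ∈ interlacing a) : StrictAnti t := fun i j hij ↦
  calc t j < a j.castSucc := (ht j).2
    _ ≤ a i.succ :=
        (strictAnti_nodes_of_mem_interlacing ht).antitone (Fin.succ_le_castSucc_iff.2 hij)
    _ < t i := (ht i).1

lemma prod_sub_div_nodalDeriv_pos (ht : t ∈ interlacing a) (j : Fin (m + 1)) :
    0 < (∏ i, (a j - t i)) / nodalDeriv a j := by
  have ha := strictAnti_nodes_of_mem_interlacing ht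
  rw [nodalDeriv_eq_prod_succAbove, ← Finset.prod_div_distrib]
  refine Finset.prod_pos fun i _ ↦ ?_
  rcases lt_or_ge i.castSucc j with hij | hji
  · rw [Fin.succAbove_of_castSucc_lt _ _ hij]
    have hle : a j ≤ a i.succ := ha.antitone (Fin.castSucc_lt_iff_succ_le.1 hij)
    exact div_pos_of_neg_of_neg (sub_neg.2 (hle.trans_lt (ht i).1)) (sub_neg.2 (ha hij))
  · rw [Fin.succAbove_of_le_castSucc _ _ hji]
    have hle : a i.castSucc ≤ a j := ha.antitone hji
    exact div_pos (sub_pos.2 ((ht i).2.trans_le hle))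
      (sub_pos.2 (ha (hji.trans_lt Fin.castSucc_lt_succ)))

lemma nodalDeriv_castSucc_mul_nodalDeriv_succ_neg (ha : StrictAnti a) (i : Fin m) :
    nodalDeriv a i.castSucc * nodalDeriv a i.succ < 0 := by
  have hlt : i.castSucc < i.succ := Fin.castSucc_lt_succ
  rw [nodalDeriv, nodalDeriv,
    ← Finset.mul_prod_erase _ _ (Finset.mem_erase.2 ⟨hlt.ne', Finset.mem_univ i.succ⟩),
    ← Finset.mul_prod_erase _ _ (Finset.mem_erase.2 ⟨hlt.ne, Finset.mem_univ i.castSucc⟩),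
    Finset.erase_right_comm, mul_mul_mul_comm, ← Finset.prod_mul_distrib]
  refine mul_neg_of_neg_of_pos (mul_neg_of_pos_of_neg (sub_pos.2 (ha hlt)) (sub_neg.2 (ha hlt)))
    (Finset.prod_pos fun k hk ↦ ?_)
  obtain ⟨hki, hki'⟩ : k ≠ i.castSucc ∧ k ≠ i.succ := by simpa using hk
  rcases lt_or_gt_of_ne hki with hlow | hhigh
  · exact mul_pos_of_neg_of_neg (sub_neg.2 (ha hlow)) (sub_neg.2 (ha (hlow.trans hlt)))
  · have hsucc : i.succ < k := (Fin.castSucc_lt_iff_succ_le.1 hhigh).lt_of_ne hki'.symm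
    exact mul_pos (sub_pos.2 (ha hhigh)) (sub_pos.2 (ha hsucc))

lemma exists_mem_Ioo_eq_zero_of_mul_neg {f : ℝ → ℝ} {x y : ℝ} (hxy : x ≤ y)
    (hf : ContinuousOn f (Icc x y)) (hsign : f y * f x < 0) : ∃ z ∈ Ioo x y, f z = 0 := by
  rcases mul_neg_iff.1 hsign with ⟨hy, hx⟩ | ⟨hy, hx⟩
  · exact intermediate_value_Ioo hxy hf ⟨hx, hy⟩
  · exact intermediate_value_Ioo' hxy hf ⟨hy, hx⟩

end Interlacing

section ResidueMap

open Set Polynomial Lagrange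

variable {m : ℕ} {a u : Fin (m + 1) → ℝ}

/-- The residues at the nodes `a_j` of the rational function `r ∏_i (z - t_i) / ∏_k (z - a_k)`,
as a function of `u = (r, t)`. -/
def residueMap (a u : Fin (m + 1) → ℝ) (j : Fin (m + 1)) : ℝ :=
  u 0 * (∏ i, (a j - Fin.tail u i)) / nodalDeriv a j

/-- The pairs `u = (r, t)` with `r > 0` and `t` interlacing `a`; `residueMap a` maps this set
bijectively to the positive orthant. -/
def interlacingCone (a : Fin (m + 1) → ℝ) : Set (Fin (m + 1) → ℝ) :=
  {u | 0 < u 0 ∧ Fin.tail u ∈ interlacing a}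

lemma residueMap_pos (hu : u ∈ interlacingCone a) (j : Fin (m + 1)) : 0 < residueMap a u j := by
  rw [residueMap, mul_div_assoc]
  exact mul_pos hu.1 (prod_sub_div_nodalDeriv_pos hu.2 j)

lemma sum_residueMap (ha : a.Injective) (u : Fin (m + 1) → ℝ) : ∑ j, residueMap a u j = u 0 := by
  have hlead : ∑ j, (nodal Finset.univ (Fin.tail u)).eval (a j) / nodalDeriv a j = 1 :=
    (leadingCoeff_eq_sum ha.injOn (by simp)).symm.trans nodal_monic.leadingCoeff
  calc ∑ j, residueMap a u j
      = u 0 * ∑ j, (nodal Finset.univ (Fin.tail u)).eval (a j) / nodalDeriv a j := by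
        simp only [residueMap, eval_nodal, Finset.mul_sum, mul_div_assoc]
    _ = u 0 := by rw [hlead, mul_one]

lemma mem_range_iff_eval_nodal_eq_zero {ι R : Type*} [Fintype ι] [CommRing R] [IsDomain R]
    {t : ι → R} {z : R} : z ∈ range t ↔ (nodal Finset.univ t).eval z = 0 := by
  simp only [eval_nodal, Finset.prod_eq_zero_iff, Finset.mem_univ, true_and, sub_eq_zero,
    mem_range, eq_comm (a := z)]

lemma injOn_residueMap (ha : a.Injective) : InjOn (residueMap a) (interlacingCone a) := by
  intro u hu v hv huv
  have head_eq : u 0 = v 0 := by rw [← sum_residueMap ha u, ← sum_residueMap ha v, huv]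
  have nodal_eq : nodal Finset.univ (Fin.tail u) = nodal Finset.univ (Fin.tail v) := by
    have degree_lt (t : Fin m → ℝ) :
        (nodal Finset.univ t).degree < (Finset.univ : Finset (Fin (m + 1))).card := by
      rw [degree_nodal, Finset.card_fin, Finset.card_fin]
      exact_mod_cast m.lt_succ_self
    refine eq_of_degrees_lt_of_eval_index_eq _ ha.injOn (degree_lt _) (degree_lt _) fun j _ ↦ ?_
    have hj := congrFun huv j
    rw [residueMap, residueMap, head_eq, div_left_inj' (nodalDeriv_ne_zero ha j)] at hj
    simpa only [eval_nodal] using mul_left_cancel₀ hv.1.ne' hj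
  have tail_eq : Fin.tail u = Fin.tail v :=
    ((strictAnti_of_mem_interlacing hu.2).range_inj (strictAnti_of_mem_interlacing hv.2)).1
      (ext fun z ↦ by simp only [mem_range_iff_eval_nodal_eq_zero, nodal_eq])
  rw [← Fin.cons_self_tail u, ← Fin.cons_self_tail v, head_eq, tail_eq]

lemma exists_interlacing_roots {P : ℝ[X]} (ha : StrictAnti a)
    (hsign : ∀ i : Fin m, P.eval (a i.castSucc) * P.eval (a i.succ) < 0) :
    ∃ t ∈ interlacing a, ∀ i, P.eval (t i) = 0 := by
  choose t ht hroot using fun i : Fin m ↦ exists_mem_Ioo_eq_zero_of_mul_neg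
    (ha Fin.castSucc_lt_succ).le P.continuous.continuousOn (hsign i)
  exact ⟨t, ht, hroot⟩

lemma eq_C_mul_nodal_of_eval_eq_zero {R : Type*} [CommRing R] [IsDomain R] {m : ℕ} {P : R[X]}
    {t : Fin m → R} (ht : t.Injective) (hdeg : P.degree ≤ m) (hroot : ∀ i, P.eval (t i) = 0) :
    P = C (P.coeff m) * nodal Finset.univ t := by
  have hcoeff : (nodal Finset.univ t).coeff m = 1 := by
    simpa [Monic, leadingCoeff] using nodal_monic (s := Finset.univ) (v := t)
  refine eq_of_degree_sub_lt_of_eval_index_eq Finset.univ ht.injOn ?_ fun i _ ↦ ?_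
  · rw [Finset.card_univ, Fintype.card_fin, degree_lt_iff_coeff_zero]
    intro k hk
    rcases hk.eq_or_lt with rfl | hlt
    · simp [hcoeff]
    · have hP : P.coeff k = 0 := coeff_eq_zero_of_degree_lt (hdeg.trans_lt (by exact_mod_cast hlt))
      have hnodal : (nodal Finset.univ t).coeff k = 0 :=
        coeff_eq_zero_of_natDegree_lt (by simpa using hlt)
      simp [hP, hnodal]
  · rw [hroot, eval_mul, eval_nodal_at_node (Finset.mem_univ i), mul_zero]

/- The preimage of `w` is found from the polynomial `P` of degree `m` with residues
`w_j = P(a_j) / A'(a_j)`: its values at the nodes alternate in sign, so its roots interlace. -/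
lemma exists_residueMap_eq (ha : StrictAnti a) {w : Fin (m + 1) → ℝ} (hw : ∀ j, 0 < w j) :
    ∃ u ∈ interlacingCone a, residueMap a u = w := by
  have hinj : InjOn a ↑(Finset.univ : Finset (Fin (m + 1))) := ha.injective.injOn
  set P : ℝ[X] := interpolate Finset.univ a fun j ↦ w j * nodalDeriv a j
  have eval_P (j : Fin (m + 1)) : P.eval (a j) = w j * nodalDeriv a j :=
    eval_interpolate_at_node _ hinj (Finset.mem_univ j)
  have coeff_P : P.coeff m = ∑ j, w j := by
    have h := coeff_eq_sum hinj (degree_interpolate_lt (r := fun j ↦ w j * nodalDeriv a j) hinj)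
    rw [Finset.card_univ, Fintype.card_fin, Nat.add_sub_cancel] at h
    refine h.trans (Finset.sum_congr rfl fun j _ ↦ ?_)
    rw [eval_P]
    exact mul_div_cancel_right₀ _ (nodalDeriv_ne_zero ha.injective j)
  obtain ⟨t, ht, hroot⟩ := exists_interlacing_roots (P := P) ha fun i ↦ by
    rw [eval_P, eval_P, mul_mul_mul_comm]
    exact mul_neg_of_pos_of_neg (mul_pos (hw _) (hw _))
      (nodalDeriv_castSucc_mul_nodalDeriv_succ_neg ha i)
  have P_eq : P = C (∑ j, w j) * nodal Finset.univ t := by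
    rw [← coeff_P]
    refine eq_C_mul_nodal_of_eval_eq_zero (strictAnti_of_mem_interlacing ht).injective ?_ hroot
    exact (degree_interpolate_le _ hinj).trans_eq (by simp)
  refine ⟨Fin.cons (∑ j, w j) t,
    ⟨Finset.sum_pos (fun j _ ↦ hw j) Finset.univ_nonempty, ht⟩, funext fun j ↦ ?_⟩
  rw [residueMap, div_eq_iff (nodalDeriv_ne_zero ha.injective j), ← eval_P, P_eq, eval_mul, eval_C,
    eval_nodal, Fin.cons_zero, Fin.tail_cons]

lemma image_residueMap (ha : StrictAnti a) :
    residueMap a '' interlacingCone a = {w | ∀ j, 0 < w j} := by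
  refine Subset.antisymm ?_ fun w hw ↦ exists_residueMap_eq ha hw
  rintro _ ⟨u, hu, rfl⟩
  exact residueMap_pos hu

/-- The Jacobian matrix of `residueMap a` at `u`. -/
def residueJacobian (a u : Fin (m + 1) → ℝ) : Matrix (Fin (m + 1)) (Fin (m + 1)) ℝ :=
  Matrix.of fun j k ↦ (nodalDeriv a j)⁻¹ *
    ((Fin.cons 1 fun _ ↦ -u 0 : Fin (m + 1) → ℝ) k * (nodalBasis (Fin.tail u) k).eval (a j))

lemma abs_det_residueJacobian (hu : u ∈ interlacingCone a) :
    |(residueJacobian a u).det| =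
      u 0 ^ m * absVandermonde (Fin.tail u) / absVandermonde a := by
  have hV : absVandermonde a ≠ 0 :=
    (absVandermonde_pos (strictAnti_nodes_of_mem_interlacing hu.2).injective).ne'
  have det_eq : (residueJacobian a u).det = (∏ j, (nodalDeriv a j)⁻¹) *
      ((∏ k, (Fin.cons 1 fun _ ↦ -u 0 : Fin (m + 1) → ℝ) k) *
        (Matrix.of fun j k ↦ (nodalBasis (Fin.tail u) k).eval (a j)).det) := by
    rw [← Matrix.det_mul_row, ← Matrix.det_mul_column]
    rfl
  rw [det_eq, abs_mul, abs_mul,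
    abs_det_eval_nodalBasis a (strictAnti_of_mem_interlacing hu.2).injective,
    Finset.prod_inv_distrib, abs_inv, Finset.abs_prod, prod_abs_nodalDeriv, Fin.prod_univ_succ]
  simp only [Fin.cons_zero, Fin.cons_succ, one_mul, Finset.prod_const, Finset.card_univ,
    Fintype.card_fin, abs_pow, abs_neg, abs_of_pos hu.1]
  field_simp

lemma hasFDerivAt_residueMap (a u : Fin (m + 1) → ℝ) :
    HasFDerivAt (residueMap a)
      (LinearMap.toContinuousLinearMap (Matrix.toLin' (residueJacobian a u))) u := by
  refine hasFDerivAt_pi'.2 fun j ↦ ?_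
  have head := hasFDerivAt_apply (𝕜 := ℝ) (F' := fun _ : Fin (m + 1) ↦ ℝ) 0 u
  have factor (i : Fin m) (_ : i ∈ Finset.univ) :=
    (hasFDerivAt_apply (𝕜 := ℝ) (F' := fun _ : Fin (m + 1) ↦ ℝ) i.succ u).const_sub (a j)
  have h := (head.mul (HasFDerivAt.finsetProd factor)).mul_const (nodalDeriv a j)⁻¹
  refine h.congr_fderiv (ContinuousLinearMap.ext fun v ↦ ?_)
  simp only [residueJacobian, nodalBasis, Matrix.mulVec, dotProduct, Fin.sum_univ_succ, eval_nodal,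
    Fin.tail, Finset.mul_sum, smul_neg, Finset.sum_neg_distrib, smul_add, add_apply, neg_apply,
    smul_apply, sum_apply, ContinuousLinearMap.proj_apply, smul_eq_mul,
    ContinuousLinearMap.comp_apply, LinearMap.coe_toContinuousLinearMap', Matrix.toLin'_apply,
    Matrix.of_apply, Fin.cons_zero, Fin.cons_succ, one_mul, neg_mul, mul_neg]
  rw [add_comm]
  refine congrArg₂ _ (by ring) (congrArg _ (Finset.sum_congr rfl fun i _ ↦ by ring))

/-- The pullback of the density `f(w) dw` on the positive orthant under `w = residueMap a (r, t)`,
as a function of `p = (r, t)`. -/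
def residuePullback {E : Type*} [AddCommGroup E] [Module ℝ E] (a : Fin (m + 1) → ℝ)
    (f : (Fin (m + 1) → ℝ) → E) (p : ℝ × (Fin m → ℝ)) : E :=
  (p.1 ^ m * absVandermonde p.2 / absVandermonde a) • f (residueMap a (Fin.cons p.1 p.2))

lemma interlacingCone_eq_preimage (a : Fin (m + 1) → ℝ) :
    interlacingCone a =
      MeasurableEquiv.piFinSuccAbove (fun _ ↦ ℝ) 0 ⁻¹' (Ioi 0 ×ˢ interlacing a) :=
  rfl

lemma measurableSet_interlacingCone (a : Fin (m + 1) → ℝ) : MeasurableSet (interlacingCone a) := by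
  rw [interlacingCone_eq_preimage]
  exact (measurableSet_Ioi_prod_interlacing a).preimage (MeasurableEquiv.measurable _)

lemma abs_det_fderiv_smul_eqOn_residuePullback {E : Type*} [AddCommGroup E] [Module ℝ E]
    (a : Fin (m + 1) → ℝ) (f : (Fin (m + 1) → ℝ) → E) :
    EqOn (fun u ↦ |(LinearMap.toContinuousLinearMap (Matrix.toLin' (residueJacobian a u))).det| •
        f (residueMap a u))
      (residuePullback a f ∘ MeasurableEquiv.piFinSuccAbove (fun _ ↦ ℝ) 0)
      (interlacingCone a) := by
  intro u hu
  have hdet : (LinearMap.toContinuousLinearMap (Matrix.toLin' (residueJacobian a u))).det =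
      (residueJacobian a u).det := by
    simp [ContinuousLinearMap.det]
  simp only [hdet, abs_det_residueJacobian hu]
  exact congrArg (fun v ↦ _ • f (residueMap a v)) (Fin.cons_self_tail u).symm

variable {E : Type*} [NormedAddCommGroup E] [NormedSpace ℝ E]

lemma integrableOn_orthant_iff_residuePullback (ha : StrictAnti a) (f : (Fin (m + 1) → ℝ) → E) :
    IntegrableOn f {w | ∀ j, 0 < w j} ↔
      IntegrableOn (residuePullback a f) (Ioi 0 ×ˢ interlacing a) := by
  rw [← image_residueMap ha, integrableOn_image_iff_integrableOn_abs_det_fderiv_smul volume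
      (measurableSet_interlacingCone a) (fun u _ ↦ (hasFDerivAt_residueMap a u).hasFDerivWithinAt)
      (injOn_residueMap ha.injective),
    integrableOn_congr_fun (abs_det_fderiv_smul_eqOn_residuePullback a f)
      (measurableSet_interlacingCone a), interlacingCone_eq_preimage]
  exact (volume_preserving_piFinSuccAbove (fun _ ↦ ℝ) 0).integrableOn_comp_preimage
    (MeasurableEquiv.measurableEmbedding _)

lemma integral_orthant_eq_integral_residuePullback (ha : StrictAnti a)
    (f : (Fin (m + 1) → ℝ) → E) :
    ∫ w in {w | ∀ j, 0 < w j}, f w = ∫ p in Ioi 0 ×ˢ interlacing a, residuePullback a f p := by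
  rw [← image_residueMap ha, integral_image_eq_integral_abs_det_fderiv_smul volume
      (measurableSet_interlacingCone a) (fun u _ ↦ (hasFDerivAt_residueMap a u).hasFDerivWithinAt)
      (injOn_residueMap ha.injective),
    setIntegral_congr_fun (measurableSet_interlacingCone a)
      (abs_det_fderiv_smul_eqOn_residuePullback a f), interlacingCone_eq_preimage]
  exact (volume_preserving_piFinSuccAbove (fun _ ↦ ℝ) 0).setIntegral_preimage_emb
    (MeasurableEquiv.measurableEmbedding _) _ _

end ResidueMap

section ComplexPowers

variable {ι : Type*}

lemma prod_ofReal_cpow (s : Finset ι) {f : ι → ℝ} (hf : ∀ i ∈ s, 0 ≤ f i) (z : ℂ) :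
    ∏ i ∈ s, (f i : ℂ) ^ z = ((∏ i ∈ s, f i : ℝ) : ℂ) ^ z := by
  classical
  induction s using Finset.induction_on with
  | empty => simp
  | insert i s hi ih =>
    rw [Finset.forall_mem_insert] at hf
    rw [Finset.prod_insert hi, Finset.prod_insert hi, ih hf.2, ofReal_mul,
      mul_cpow_ofReal_nonneg hf.1 (Finset.prod_nonneg hf.2)]

lemma prod_cpow_eq_cpow_sum (s : Finset ι) {x : ℂ} (hx : x ≠ 0) (f : ι → ℂ) :
    ∏ i ∈ s, x ^ f i = x ^ ∑ i ∈ s, f i := by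
  simp only [cpow_def_of_ne_zero hx, ← exp_sum, Finset.mul_sum]

lemma ofReal_norm_cpow {r : ℝ} (hr : 0 < r) (z : ℂ) :
    ((‖(r : ℂ) ^ z‖ : ℝ) : ℂ) = (r : ℂ) ^ (z.re : ℂ) := by
  rw [norm_cpow_eq_rpow_re_of_pos hr, ofReal_cpow hr.le]

lemma cpow_sub_one_mul_self {x : ℂ} (hx : x ≠ 0) (z : ℂ) : x ^ (z - 1) * x = x ^ z := by
  rw [cpow_sub _ _ hx, cpow_one, div_mul_cancel₀ _ hx]

lemma sq_ofReal_cpow {r : ℝ} (hr : 0 < r) (z : ℂ) :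
    ((r ^ 2 : ℝ) : ℂ) ^ z = (r : ℂ) ^ (2 * z) := by
  rw [sq, ofReal_mul, mul_cpow_ofReal_nonneg hr.le hr.le, two_mul,
    cpow_add _ _ (ofReal_ne_zero.2 hr.ne')]

end ComplexPowers

section DixonAnderson

open Set

/-- The density `e^{-x} x^{s-1}` whose integral over `(0, ∞)` is `Γ(s)`. -/
def gammaDensity (s : ℂ) (x : ℝ) : ℂ := (Real.exp (-x) : ℂ) * (x : ℂ) ^ (s - 1)

lemma integrableOn_gammaDensity {s : ℂ} (hs : 0 < s.re) : IntegrableOn (gammaDensity s) (Ioi 0) :=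
  GammaIntegral_convergent hs

lemma integral_gammaDensity {s : ℂ} (hs : 0 < s.re) :
    ∫ x in Ioi 0, gammaDensity s x = Gamma s :=
  (Gamma_eq_integral hs).symm

section Fintype

variable {ι : Type*} [Fintype ι] {s : ι → ℂ}

lemma setOf_forall_pos_eq_pi (ι : Type*) : {w : ι → ℝ | ∀ j, 0 < w j} = univ.pi fun _ ↦ Ioi 0 := by
  simp [Set.pi]

lemma integrableOn_prod_gammaDensity (hs : ∀ j, 0 < (s j).re) :
    IntegrableOn (fun w : ι → ℝ ↦ ∏ j, gammaDensity (s j) (w j)) {w | ∀ j, 0 < w j} := by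
  rw [setOf_forall_pos_eq_pi, IntegrableOn, volume_pi, Measure.restrict_pi_pi]
  exact Integrable.fintype_prod fun j ↦ integrableOn_gammaDensity (hs j)

lemma integral_prod_gammaDensity (hs : ∀ j, 0 < (s j).re) :
    ∫ w in {w : ι → ℝ | ∀ j, 0 < w j}, ∏ j, gammaDensity (s j) (w j) = ∏ j, Gamma (s j) := by
  rw [setOf_forall_pos_eq_pi, volume_pi, Measure.restrict_pi_pi, integral_fintype_prod_eq_prod]
  exact Finset.prod_congr rfl fun j _ ↦ integral_gammaDensity (hs j)

/-- The multivariate Beta function `∏_j Γ(s_j) / Γ(∑_j s_j)`. -/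
def multiBeta (s : ι → ℂ) : ℂ :=
  (∏ j, Gamma (s j)) / Gamma (∑ j, s j)

lemma re_sum_pos [Nonempty ι] (hs : ∀ j, 0 < (s j).re) : 0 < (∑ j, s j).re := by
  rw [re_sum]
  exact Finset.sum_pos (fun j _ ↦ hs j) Finset.univ_nonempty

lemma multiBeta_ne_zero [Nonempty ι] (hs : ∀ j, 0 < (s j).re) : multiBeta s ≠ 0 :=
  div_ne_zero (Finset.prod_ne_zero_iff.2 fun j _ ↦ Gamma_ne_zero_of_re_pos (hs j))
    (Gamma_ne_zero_of_re_pos (re_sum_pos hs))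

end Fintype

lemma integrable_of_integrable_prod_mul {X Y : Type*} [MeasurableSpace X] [MeasurableSpace Y]
    {μ : Measure X} {ν : Measure Y} [SFinite μ] [SFinite ν] {f : X → ℂ} {g : Y → ℂ}
    (hfg : Integrable (fun p : X × Y ↦ f p.1 * g p.2) (μ.prod ν)) (hf : ∫ x, f x ∂μ ≠ 0) :
    Integrable g ν := by
  have f_ne_zero : ∃ᵐ x ∂μ, f x ≠ 0 := fun h ↦
    hf (integral_eq_zero_of_ae (h.mono fun _ hx ↦ not_not.1 hx))
  obtain ⟨x, hfx, hgx⟩ := (f_ne_zero.and_eventually hfg.prod_right_ae).exists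
  exact (integrable_const_mul_iff (IsUnit.mk0 _ hfx) g).1 hgx

variable {m : ℕ} {a : Fin (m + 1) → ℝ} {t : Fin m → ℝ}

/-- The integrand `∏_{i<k} |t_i - t_k| ∏_{i,j} |a_j - t_i|^{s_j - 1}` of the Dixon–Anderson integral
over the sequences `t` interlacing `a`. -/
def dixonAndersonIntegrand (a : Fin (m + 1) → ℝ) (s : Fin (m + 1) → ℂ) (t : Fin m → ℝ) : ℂ :=
  absVandermonde t * ∏ j, ((|∏ i, (a j - t i)| : ℝ) : ℂ) ^ (s j - 1)

/-- The factor `∏_{i<j} |a_i - a_j|^{s_i + s_j - 1}` in the value of the Dixon–Anderson integral,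
arranged as it appears in the change of variables. -/
def dixonAndersonFactor (a : Fin (m + 1) → ℝ) (s : Fin (m + 1) → ℂ) : ℂ :=
  absVandermonde a * ∏ j, ((|nodalDeriv a j| : ℝ) : ℂ) ^ (s j - 1)

lemma dixonAndersonFactor_ne_zero (ha : a.Injective) (s : Fin (m + 1) → ℂ) :
    dixonAndersonFactor a s ≠ 0 := by
  refine mul_ne_zero (ofReal_ne_zero.2 (absVandermonde_pos ha).ne')
    (Finset.prod_ne_zero_iff.2 fun j _ ↦ ?_)
  rw [cpow_ne_zero_iff, ofReal_ne_zero, abs_ne_zero]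
  exact Or.inl (nodalDeriv_ne_zero ha j)

lemma residueMap_cons_cpow {r : ℝ} (hr : 0 < r) (ht : t ∈ interlacing a) (j : Fin (m + 1))
    (z : ℂ) :
    (residueMap a (Fin.cons r t) j : ℂ) ^ z =
      (r : ℂ) ^ z * ((|∏ i, (a j - t i)| : ℝ) : ℂ) ^ z / ((|nodalDeriv a j| : ℝ) : ℂ) ^ z := by
  have hpos : 0 < residueMap a (Fin.cons r t) j := residueMap_pos ⟨hr, ht⟩ j
  have habs : residueMap a (Fin.cons r t) j = r * |∏ i, (a j - t i)| / |nodalDeriv a j| := by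
    rw [← abs_of_pos hpos, residueMap, abs_div, abs_mul, Fin.cons_zero, Fin.tail_cons,
      abs_of_pos hr]
  rw [habs, ofReal_div, div_cpow_ofReal_nonneg (by positivity) (abs_nonneg _), ofReal_mul,
    mul_cpow_ofReal_nonneg hr.le (abs_nonneg _)]

lemma residuePullback_prod_gammaDensity (s : Fin (m + 1) → ℂ) {r : ℝ} (hr : 0 < r)
    (ht : t ∈ interlacing a) :
    residuePullback a (fun w ↦ ∏ j, gammaDensity (s j) (w j)) (r, t) =
      gammaDensity (∑ j, s j) r *
        ((dixonAndersonFactor a s)⁻¹ * dixonAndersonIntegrand a s t) := by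
  have hr₀ : (r : ℂ) ≠ 0 := ofReal_ne_zero.2 hr.ne'
  have hexp : ∏ j, (Real.exp (-residueMap a (Fin.cons r t) j) : ℂ) = Real.exp (-r) := by
    rw [← ofReal_prod, ← Real.exp_sum, Finset.sum_neg_distrib,
      sum_residueMap (strictAnti_nodes_of_mem_interlacing ht).injective, Fin.cons_zero]
  have hpow : (r : ℂ) ^ m * ∏ j, (r : ℂ) ^ (s j - 1) = (r : ℂ) ^ (∑ j, s j - 1) := by
    rw [prod_cpow_eq_cpow_sum _ hr₀, ← cpow_natCast, ← cpow_add _ _ hr₀, Finset.sum_sub_distrib]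
    congr 1
    simp only [Finset.sum_const, Finset.card_univ, Fintype.card_fin, nsmul_eq_mul, Nat.cast_succ]
    ring
  simp only [residuePullback, gammaDensity, Finset.prod_mul_distrib, hexp,
    residueMap_cons_cpow hr ht, Finset.prod_div_distrib, real_smul, ← hpow, dixonAndersonFactor,
    dixonAndersonIntegrand]
  push_cast
  ring

lemma residuePullback_prod_gammaDensity_eqOn (a : Fin (m + 1) → ℝ) (s : Fin (m + 1) → ℂ) :
    EqOn (residuePullback a fun w ↦ ∏ j, gammaDensity (s j) (w j))
      (fun p ↦ gammaDensity (∑ j, s j) p.1 *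
        ((dixonAndersonFactor a s)⁻¹ * dixonAndersonIntegrand a s p.2))
      (Ioi 0 ×ˢ interlacing a) :=
  fun _ hp ↦ residuePullback_prod_gammaDensity s hp.1 hp.2

theorem integrableOn_dixonAndersonIntegrand (ha : StrictAnti a) {s : Fin (m + 1) → ℂ}
    (hs : ∀ j, 0 < (s j).re) :
    IntegrableOn (dixonAndersonIntegrand a s) (interlacing a) := by
  have hcone :=
    (integrableOn_orthant_iff_residuePullback ha _).1 (integrableOn_prod_gammaDensity hs)
  rw [integrableOn_congr_fun (residuePullback_prod_gammaDensity_eqOn a s)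
    (measurableSet_Ioi_prod_interlacing a), IntegrableOn, Measure.volume_eq_prod,
    ← Measure.prod_restrict] at hcone
  refine (integrable_const_mul_iff
    (IsUnit.mk0 _ (inv_ne_zero (dixonAndersonFactor_ne_zero ha.injective s))) _).1
    (integrable_of_integrable_prod_mul hcone ?_)
  rw [integral_gammaDensity (re_sum_pos hs)]
  exact Gamma_ne_zero_of_re_pos (re_sum_pos hs)

theorem integral_dixonAndersonIntegrand (ha : StrictAnti a) {s : Fin (m + 1) → ℂ}
    (hs : ∀ j, 0 < (s j).re) :
    ∫ t in interlacing a, dixonAndersonIntegrand a s t =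
      multiBeta s * dixonAndersonFactor a s := by
  have hfactor := dixonAndersonFactor_ne_zero ha.injective s
  have hGamma := Gamma_ne_zero_of_re_pos (re_sum_pos hs)
  have hprod : ∏ j, Gamma (s j) = Gamma (∑ j, s j) * ((dixonAndersonFactor a s)⁻¹ *
      ∫ t in interlacing a, dixonAndersonIntegrand a s t) := by
    rw [← integral_prod_gammaDensity hs, integral_orthant_eq_integral_residuePullback ha,
      setIntegral_congr_fun (measurableSet_Ioi_prod_interlacing a)
        (residuePullback_prod_gammaDensity_eqOn a s),
      ← integral_gammaDensity (re_sum_pos hs), ← integral_const_mul]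
    exact setIntegral_prod_mul (μ := volume) (ν := volume) (gammaDensity (∑ j, s j))
      (fun t ↦ (dixonAndersonFactor a s)⁻¹ * dixonAndersonIntegrand a s t) (Ioi 0) (interlacing a)
  rw [multiBeta, hprod]
  field_simp

lemma absVandermonde_mul_dixonAndersonFactor (ha : a.Injective) (γ : ℂ) :
    absVandermonde a * dixonAndersonFactor a (fun _ ↦ γ) = (absVandermonde a : ℂ) ^ (2 * γ) := by
  have hV := absVandermonde_pos ha
  rw [dixonAndersonFactor, prod_ofReal_cpow _ fun _ _ ↦ abs_nonneg _, prod_abs_nodalDeriv,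
    ← sq_ofReal_cpow hV,
    ← cpow_sub_one_mul_self (ofReal_ne_zero.2 (pow_pos hV 2).ne') γ]
  push_cast
  ring

end DixonAnderson

section Bordered

open Finset

variable {m : ℕ}

/-- The sequence `b, x_1, …, x_m, c`. It serves both for the nodes `1 > x_1 > ⋯ > x_m > 0` and for
the exponents attached to them. -/
def bordered {R : Type*} (b : R) (x : Fin m → R) (c : R) : Fin (m + 2) → R :=
  Fin.cons b (Fin.snoc (α := fun _ ↦ R) x c : Fin (m + 1) → R)

section Entries

variable {R : Type*} (b : R) (x : Fin m → R) (c : R)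

@[simp] lemma bordered_zero : bordered b x c 0 = b :=
  rfl

@[simp] lemma bordered_last : bordered b x c (Fin.last (m + 1)) = c := by
  rw [← Fin.succ_last, bordered, Fin.cons_succ, Fin.snoc_last]

@[simp] lemma bordered_succ_castSucc (i : Fin m) : bordered b x c i.castSucc.succ = x i := by
  rw [bordered, Fin.cons_succ, Fin.snoc_castSucc]

lemma forall_bordered {p : R → Prop} :
    (∀ j, p (bordered b x c j)) ↔ p b ∧ (∀ i, p (x i)) ∧ p c := by
  simp only [Fin.forall_fin_succ (n := m + 1), Fin.forall_fin_succ' (n := m), bordered_zero,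
    bordered_succ_castSucc, Fin.succ_last, bordered_last]

end Entries

@[to_additive]
lemma prod_univ_succ_castSucc {M : Type*} [CommMonoid M] (f : Fin (m + 2) → M) :
    ∏ j, f j = f 0 * ((∏ i : Fin m, f i.castSucc.succ) * f (Fin.last (m + 1))) := by
  rw [Fin.prod_univ_succ, Fin.prod_univ_castSucc, Fin.succ_last]

section NodalDeriv

variable {R : Type*} [CommRing R] (b : R) (x : Fin m → R) (c : R)

lemma nodalDeriv_bordered_zero :
    nodalDeriv (bordered b x c) 0 = (b - c) * ∏ i, (b - x i) := by
  simp [nodalDeriv_eq_prod_succAbove, Fin.prod_univ_castSucc, mul_comm]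

lemma nodalDeriv_bordered_last :
    nodalDeriv (bordered b x c) (Fin.last (m + 1)) = (c - b) * ∏ i, (c - x i) := by
  simp [nodalDeriv_eq_prod_succAbove, Fin.prod_univ_succ]

lemma nodalDeriv_bordered_succ_castSucc (i : Fin m) :
    nodalDeriv (bordered b x c) i.castSucc.succ =
      (x i - b) * (x i - c) * nodalDeriv x i := by
  have hlast : i.castSucc.succ ≠ Fin.last (m + 1) := Fin.succ_castSucc i ▸ Fin.castSucc_ne_last _
  simp only [nodalDeriv_eq_prod_ite, prod_univ_succ_castSucc, if_neg hlast,
    if_neg (Fin.succ_ne_zero _), Fin.succ_inj, Fin.castSucc_inj, bordered_zero, bordered_last,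
    bordered_succ_castSucc]
  ring

end NodalDeriv

lemma prod_abs_nodalDeriv_bordered (b : ℝ) (x : Fin m → ℝ) (c : ℝ) :
    ∏ i : Fin m, |nodalDeriv (bordered b x c) i.castSucc.succ| =
      (∏ i, |x i - c|) * (∏ i, |b - x i|) * absVandermonde x ^ 2 := by
  simp only [nodalDeriv_bordered_succ_castSucc, abs_mul, prod_mul_distrib, prod_abs_nodalDeriv,
    abs_sub_comm b]
  ring

lemma absVandermonde_bordered (b : ℝ) (x : Fin m → ℝ) (c : ℝ) :
    absVandermonde (bordered b x c) =
      |b - c| * (∏ i, |b - x i|) * (∏ i, |x i - c|) * absVandermonde x := by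
  have hx := absVandermonde_nonneg x
  refine (pow_left_inj₀ (absVandermonde_nonneg _) (by positivity) two_ne_zero).1 ?_
  rw [← prod_abs_nodalDeriv, prod_univ_succ_castSucc, prod_abs_nodalDeriv_bordered]
  simp only [nodalDeriv_bordered_zero, nodalDeriv_bordered_last, abs_mul, abs_prod, abs_sub_comm c]
  ring

lemma mem_interlacing_bordered {b c : ℝ} {x : Fin m → ℝ} {y : Fin (m + 1) → ℝ} :
    y ∈ interlacing (bordered b x c) ↔ x ∈ interlacing y ∧ c < y (Fin.last m) ∧ y 0 < b := by
  have hlower : (∀ i, bordered b x c i.succ < y i) ↔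
      (∀ i : Fin m, x i < y i.castSucc) ∧ c < y (Fin.last m) := by
    simp only [Fin.forall_fin_succ', bordered_succ_castSucc, Fin.succ_last, bordered_last]
  have hupper : (∀ i, y i < bordered b x c i.castSucc) ↔
      y 0 < b ∧ ∀ i : Fin m, y i.succ < x i := by
    simp only [Fin.forall_fin_succ, ← Fin.succ_castSucc, bordered_succ_castSucc, Fin.castSucc_zero,
      bordered_zero]
  simp only [interlacing, Set.mem_ofPred_eq, Set.mem_Ioo, forall_and, hlower, hupper]
  tauto

lemma strictAnti_bordered {b c : ℝ} {x : Fin m → ℝ} (hx : StrictAnti x) (hcb : c < b)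
    (hxc : ∀ i, c < x i) (hxb : ∀ i, x i < b) : StrictAnti (bordered b x c) := by
  intro i j
  induction i using Fin.cases with
  | zero =>
    induction j using Fin.cases with
    | zero => simp
    | succ j => induction j using Fin.lastCases <;> simp [*]
  | succ i =>
    induction j using Fin.cases with
    | zero => simp
    | succ j =>
      induction i using Fin.lastCases <;> induction j using Fin.lastCases <;>
        simp [hx.lt_iff_gt, Fin.le_last, *]

end Bordered

section FubiniOnRegion

open Set

variable {X Y E : Type*} {Z : Set (X × Y)} {A : Set X} {B : X → Set Y} {f : X × Y → E}

lemma indicator_section_of_mem [Zero E] (hZ : ∀ x y, (x, y) ∈ Z ↔ x ∈ A ∧ y ∈ B x) {x : X}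
    (hx : x ∈ A) : (fun y ↦ Z.indicator f (x, y)) = (B x).indicator fun y ↦ f (x, y) := by
  ext y
  by_cases hy : y ∈ B x <;> simp [indicator, hZ, hx, hy]

lemma indicator_section_of_notMem [Zero E] (hZ : ∀ x y, (x, y) ∈ Z ↔ x ∈ A ∧ y ∈ B x) {x : X}
    (hx : x ∉ A) : (fun y ↦ Z.indicator f (x, y)) = 0 := by
  ext y
  simp [indicator, hZ, hx]

variable [MeasurableSpace Y] [NormedAddCommGroup E] {ν : Measure Y}

lemma integral_indicator_section [NormedSpace ℝ E] (hZ : ∀ x y, (x, y) ∈ Z ↔ x ∈ A ∧ y ∈ B x)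
    (hB : ∀ x, MeasurableSet (B x)) :
    (fun x ↦ ∫ y, Z.indicator f (x, y) ∂ν) = A.indicator fun x ↦ ∫ y in B x, f (x, y) ∂ν := by
  ext x
  by_cases hx : x ∈ A
  · rw [indicator_section_of_mem hZ hx, integral_indicator (hB x), indicator_of_mem hx]
  · rw [indicator_section_of_notMem hZ hx, indicator_of_notMem hx]
    exact integral_zero Y E

variable [MeasurableSpace X] {μ : Measure X} [SFinite ν]

lemma integrableOn_of_sections (hZm : MeasurableSet Z)
    (hZ : ∀ x y, (x, y) ∈ Z ↔ x ∈ A ∧ y ∈ B x)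
    (hA : MeasurableSet A) (hB : ∀ x, MeasurableSet (B x))
    (hf : AEStronglyMeasurable f ((μ.prod ν).restrict Z))
    (hsection : ∀ x ∈ A, IntegrableOn (fun y ↦ f (x, y)) (B x) ν)
    (hnorm : IntegrableOn (fun x ↦ ∫ y in B x, ‖f (x, y)‖ ∂ν) A μ) :
    IntegrableOn f Z (μ.prod ν) := by
  rw [← integrable_indicator_iff hZm,
    integrable_prod_iff ((aestronglyMeasurable_indicator_iff hZm).2 hf)]
  refine ⟨.of_forall fun x ↦ ?_, ?_⟩
  · by_cases hx : x ∈ A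
    · rw [indicator_section_of_mem hZ hx, integrable_indicator_iff (hB x)]
      exact hsection x hx
    · rw [indicator_section_of_notMem hZ hx]
      exact integrable_zero Y E ν
  · simp only [norm_indicator_eq_indicator_norm]
    rwa [integral_indicator_section hZ hB, integrable_indicator_iff hA]

lemma integrableOn_comp_swap_iff [SFinite μ] :
    IntegrableOn (f ∘ Prod.swap) (Prod.swap ⁻¹' Z) (ν.prod μ) ↔ IntegrableOn f Z (μ.prod ν) :=
  Measure.measurePreserving_swap.integrableOn_comp_preimage
    MeasurableEquiv.prodComm.measurableEmbedding

variable [NormedSpace ℝ E]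

lemma integrableOn_integral_section (hZm : MeasurableSet Z)
    (hZ : ∀ x y, (x, y) ∈ Z ↔ x ∈ A ∧ y ∈ B x)
    (hA : MeasurableSet A) (hB : ∀ x, MeasurableSet (B x)) (hf : IntegrableOn f Z (μ.prod ν)) :
    IntegrableOn (fun x ↦ ∫ y in B x, f (x, y) ∂ν) A μ := by
  rw [← integrable_indicator_iff hA, ← integral_indicator_section hZ hB]
  exact ((integrable_indicator_iff hZm).2 hf).integral_prod_left

lemma setIntegral_prod_sections [SFinite μ] (hZm : MeasurableSet Z)
    (hZ : ∀ x y, (x, y) ∈ Z ↔ x ∈ A ∧ y ∈ B x)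
    (hA : MeasurableSet A) (hB : ∀ x, MeasurableSet (B x)) (hf : IntegrableOn f Z (μ.prod ν)) :
    ∫ p in Z, f p ∂μ.prod ν = ∫ x in A, ∫ y in B x, f (x, y) ∂ν ∂μ := by
  rw [← integral_indicator hA, ← integral_indicator_section hZ hB, ← integral_indicator hZm,
    integral_prod _ ((integrable_indicator_iff hZm).2 hf)]

lemma integral_integral_swap_of_sections [SFinite μ] {C : Set Y} {D : Y → Set X}
    (hZm : MeasurableSet Z) (hZ : ∀ x y, (x, y) ∈ Z ↔ x ∈ A ∧ y ∈ B x)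
    (hZ' : ∀ y x, (x, y) ∈ Z ↔ y ∈ C ∧ x ∈ D y) (hA : MeasurableSet A)
    (hB : ∀ x, MeasurableSet (B x)) (hC : MeasurableSet C) (hD : ∀ y, MeasurableSet (D y))
    (hf : IntegrableOn f Z (μ.prod ν)) :
    ∫ x in A, ∫ y in B x, f (x, y) ∂ν ∂μ = ∫ y in C, ∫ x in D y, f (x, y) ∂μ ∂ν := by
  rw [← setIntegral_prod_sections hZm hZ hA hB hf,
    ← Measure.measurePreserving_swap.setIntegral_preimage_emb
      MeasurableEquiv.prodComm.measurableEmbedding]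
  exact setIntegral_prod_sections (measurable_swap hZm) hZ' hC hD (integrableOn_comp_swap_iff.2 hf)

end FubiniOnRegion

section SelbergRecursion

open Set

variable {n m : ℕ} (α β γ : ℂ)

/-- The weight `∏_i y_i^α (1 - y_i)^β` of the Jacobi ensemble. -/
def jacobiWeight (α β : ℂ) (y : Fin n → ℝ) : ℂ :=
  ∏ i, (y i : ℂ) ^ α * ((1 - y i : ℝ) : ℂ) ^ β

lemma jacobiWeight_eq_cpow_prod {y : Fin n → ℝ} (hy : ∀ i, 0 < y i ∧ y i < 1) :
    jacobiWeight α β y = ((∏ i, y i : ℝ) : ℂ) ^ α * ((∏ i, (1 - y i) : ℝ) : ℂ) ^ β := by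
  rw [jacobiWeight, Finset.prod_mul_distrib, prod_ofReal_cpow _ fun i _ ↦ (hy i).1.le,
    prod_ofReal_cpow _ fun i _ ↦ (sub_pos.2 (hy i).2).le]

lemma strictAnti_of_mem_orderedSimplex {y : Fin n → ℝ} (hy : y ∈ orderedSimplex n) : StrictAnti y :=
  fun i j hij ↦ hy.2 i j hij

lemma isOpen_orderedSimplex (n : ℕ) : IsOpen (orderedSimplex n) := by
  simp only [orderedSimplex, ofPred_and, ofPred_forall]
  refine .inter (isOpen_iInter_of_finite fun i ↦ .inter ?_ ?_)
    (isOpen_iInter_of_finite fun i ↦ isOpen_iInter_of_finite fun j ↦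
      isOpen_iInter_of_finite fun _ ↦ ?_)
  all_goals exact isOpen_lt (by fun_prop) (by fun_prop)

lemma selbergIntegrand_one_eq {y : Fin n → ℝ} (hy : y ∈ orderedSimplex n) :
    selbergIntegrand n (fun _ ↦ 1) α β γ y =
      jacobiWeight α β y * (absVandermonde y : ℂ) ^ (2 * γ) := by
  have hinner (i : Fin n) :
      ∏ j, (if i < j then ((y i - y j : ℝ) : ℂ) ^ (2 * γ) else 1) =
        ((∏ j ∈ Finset.Ioi i, |y i - y j| : ℝ) : ℂ) ^ (2 * γ) := by
    rw [← prod_ofReal_cpow _ fun _ _ ↦ abs_nonneg _, ← Finset.prod_filter, Finset.filter_lt_eq_Ioi]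
    refine Finset.prod_congr rfl fun j hj ↦ ?_
    rw [abs_of_pos (sub_pos.2 (hy.2 i j (Finset.mem_Ioi.1 hj)))]
  rw [selbergIntegrand, mul_one, jacobiWeight, absVandermonde_eq_prod_Ioi,
    ← prod_ofReal_cpow _ fun _ _ ↦ Finset.prod_nonneg fun _ _ ↦ abs_nonneg _]
  simp only [hinner]

/-- The pairs of a sequence `y` in the ordered simplex `Δ_{m+1}` and a sequence `x`
interlacing `y`. -/
def interlacingPairs (m : ℕ) : Set ((Fin m → ℝ) × (Fin (m + 1) → ℝ)) :=
  {p | p.2 ∈ orderedSimplex (m + 1) ∧ p.1 ∈ interlacing p.2}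

lemma isOpen_interlacingPairs (m : ℕ) : IsOpen (interlacingPairs m) := by
  suffices IsOpen {p : (Fin m → ℝ) × (Fin (m + 1) → ℝ) |
      ∀ i, p.2 i.succ < p.1 i ∧ p.1 i < p.2 i.castSucc} from
    ((isOpen_orderedSimplex (m + 1)).preimage continuous_snd).inter this
  simp only [ofPred_and, ofPred_forall]
  refine isOpen_iInter_of_finite fun i ↦ .inter ?_ ?_
  all_goals exact isOpen_lt (by fun_prop) (by fun_prop)

lemma mem_interlacingPairs_iff (x : Fin m → ℝ) (y : Fin (m + 1) → ℝ) :
    (x, y) ∈ interlacingPairs m ↔ x ∈ orderedSimplex m ∧ y ∈ interlacing (bordered 1 x 0) := by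
  rw [mem_interlacing_bordered]
  constructor
  · rintro ⟨hy, hx⟩
    exact ⟨⟨fun i ↦ ⟨(hy.1 _).1.trans (hx i).1, (hx i).2.trans (hy.1 _).2⟩,
      fun i j hij ↦ strictAnti_of_mem_interlacing hx hij⟩, hx, (hy.1 _).1, (hy.1 _).2⟩
  · rintro ⟨-, hx, hlast, hzero⟩
    have hy : StrictAnti y := strictAnti_nodes_of_mem_interlacing hx
    exact ⟨⟨fun i ↦ ⟨hlast.trans_le (hy.antitone (Fin.le_last i)),
      (hy.antitone (Fin.zero_le i)).trans_lt hzero⟩, fun i j hij ↦ hy hij⟩, hx⟩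

/-- The integrand of Anderson's double integral over `interlacingPairs m`. -/
def andersonKernel (α β γ : ℂ) (p : (Fin m → ℝ) × (Fin (m + 1) → ℝ)) : ℂ :=
  jacobiWeight α β p.2 * absVandermonde p.2 * dixonAndersonIntegrand p.2 (fun _ ↦ γ) p.1

lemma measurable_andersonKernel :
    Measurable (andersonKernel α β γ : (Fin m → ℝ) × (Fin (m + 1) → ℝ) → ℂ) := by
  unfold andersonKernel jacobiWeight dixonAndersonIntegrand
  simp only [absVandermonde_eq_prod_Ioi]
  fun_prop

lemma ofReal_norm_andersonKernel {p : (Fin m → ℝ) × (Fin (m + 1) → ℝ)}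
    (hp : p ∈ interlacingPairs m) :
    ((‖andersonKernel α β γ p‖ : ℝ) : ℂ) = andersonKernel α.re β.re γ.re p := by
  have hprod (j : Fin (m + 1)) : 0 < |∏ i, (p.2 j - p.1 i)| :=
    abs_pos.2 fun h ↦ by simpa [h] using prod_sub_div_nodalDeriv_pos hp.2 j
  have hexp : ((γ - 1).re : ℂ) = γ.re - 1 := by simp
  simp only [andersonKernel, jacobiWeight, dixonAndersonIntegrand, norm_mul, norm_prod, ofReal_mul,
    ofReal_prod, Complex.norm_of_nonneg (absVandermonde_nonneg _), ofReal_norm_cpow (hp.1.1 _).1,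
    ofReal_norm_cpow (sub_pos.2 (hp.1.1 _).2), ofReal_norm_cpow (hprod _), hexp]

lemma andersonKernel_eq_bordered {x : Fin m → ℝ} {y : Fin (m + 1) → ℝ}
    (hy : ∀ i, 0 < y i ∧ y i < 1) :
    andersonKernel α β γ (x, y) = absVandermonde x *
      dixonAndersonIntegrand (bordered 1 x 0) (bordered (β + 1) (fun _ ↦ γ) (α + 1)) y := by
  have hone : |∏ i, (1 - y i)| = ∏ i, (1 - y i) :=
    abs_of_pos (Finset.prod_pos fun i _ ↦ sub_pos.2 (hy i).2)
  have hzero : |∏ i, (0 - y i)| = ∏ i, y i := by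
    simp only [Finset.abs_prod, zero_sub, abs_neg, abs_of_pos (hy _).1]
  have hcross : ∏ j, ((|∏ i, (y j - x i)| : ℝ) : ℂ) ^ (γ - 1) =
      ∏ i, ((|∏ j, (x i - y j)| : ℝ) : ℂ) ^ (γ - 1) := by
    rw [prod_ofReal_cpow _ fun _ _ ↦ abs_nonneg _, prod_ofReal_cpow _ fun _ _ ↦ abs_nonneg _]
    simp only [Finset.abs_prod]
    rw [Finset.prod_comm]
    simp only [abs_sub_comm]
  simp only [andersonKernel, dixonAndersonIntegrand, prod_univ_succ_castSucc, bordered_zero,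
    bordered_last, bordered_succ_castSucc, add_sub_cancel_right, hone, hzero, hcross,
    jacobiWeight_eq_cpow_prod α β hy]
  ring

lemma absVandermonde_mul_dixonAndersonFactor_bordered {x : Fin m → ℝ}
    (hx : x ∈ orderedSimplex m) :
    absVandermonde x *
        dixonAndersonFactor (bordered 1 x 0) (bordered (β + 1) (fun _ ↦ γ) (α + 1)) =
      selbergIntegrand m (fun _ ↦ 1) (α + γ) (β + γ) γ x := by
  have hV : 0 < absVandermonde x :=
    absVandermonde_pos (strictAnti_of_mem_orderedSimplex hx).injective
  have hP : 0 < ∏ i, x i := Finset.prod_pos fun i _ ↦ (hx.1 i).1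
  have hQ : 0 < ∏ i, (1 - x i) := Finset.prod_pos fun i _ ↦ sub_pos.2 (hx.1 i).2
  have habsP : ∏ i, |x i| = ∏ i, x i := by simp only [abs_of_pos (hx.1 _).1]
  have habsQ : ∏ i, |1 - x i| = ∏ i, (1 - x i) := by simp only [abs_of_pos (sub_pos.2 (hx.1 _).2)]
  rw [selbergIntegrand_one_eq _ _ _ hx, jacobiWeight_eq_cpow_prod _ _ hx.1, dixonAndersonFactor,
    prod_univ_succ_castSucc, absVandermonde_bordered]
  simp only [bordered_zero, bordered_last, bordered_succ_castSucc, add_sub_cancel_right]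
  rw [prod_ofReal_cpow _ fun _ _ ↦ abs_nonneg _, prod_abs_nodalDeriv_bordered,
    nodalDeriv_bordered_zero, nodalDeriv_bordered_last]
  simp only [abs_mul, Finset.abs_prod, sub_zero, zero_sub, abs_neg, abs_one, one_mul, habsP, habsQ]
  generalize (∏ i, x i) = P at *
  generalize (∏ i, (1 - x i)) = Q at *
  have hP' : (P : ℂ) ≠ 0 := ofReal_ne_zero.2 hP.ne'
  have hQ' : (Q : ℂ) ≠ 0 := ofReal_ne_zero.2 hQ.ne'
  rw [ofReal_mul (P * Q), mul_cpow_ofReal_nonneg (mul_pos hP hQ).le (sq_nonneg _), ofReal_mul P Q,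
    mul_cpow_ofReal_nonneg hP.le hQ.le, cpow_add _ _ hP', cpow_add _ _ hQ', ← sq_ofReal_cpow hV,
    ← cpow_sub_one_mul_self hP' γ, ← cpow_sub_one_mul_self hQ' γ,
    ← cpow_sub_one_mul_self (ofReal_ne_zero.2 (pow_pos hV 2).ne') γ]
  push_cast
  ring

lemma setIntegral_andersonKernel_fst {γ : ℂ} (hγ : 0 < γ.re) {y : Fin (m + 1) → ℝ}
    (hy : y ∈ orderedSimplex (m + 1)) :
    ∫ x in interlacing y, andersonKernel α β γ (x, y) =
      multiBeta (fun _ : Fin (m + 1) ↦ γ) * selbergIntegrand (m + 1) (fun _ ↦ 1) α β γ y := by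
  have hanti : StrictAnti y := strictAnti_of_mem_orderedSimplex hy
  calc ∫ x in interlacing y, andersonKernel α β γ (x, y)
      = jacobiWeight α β y * absVandermonde y *
          (multiBeta (fun _ : Fin (m + 1) ↦ γ) * dixonAndersonFactor y fun _ ↦ γ) := by
        rw [← integral_dixonAndersonIntegrand hanti fun _ ↦ hγ, ← integral_const_mul]
        rfl
    _ = _ := by
        rw [selbergIntegrand_one_eq _ _ _ hy,
          ← absVandermonde_mul_dixonAndersonFactor hanti.injective]
        ring

variable {α β γ}

lemma re_bordered_pos (hα : -1 < α.re) (hβ : -1 < β.re) (hγ : 0 < γ.re) (j : Fin (m + 2)) :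
    0 < (bordered (β + 1) (fun _ : Fin m ↦ γ) (α + 1) j).re := by
  refine (forall_bordered (p := fun z : ℂ ↦ 0 < z.re) _ _ _).2 ⟨?_, fun _ ↦ hγ, ?_⟩ j
  all_goals rw [add_re, one_re]; linarith

lemma strictAnti_bordered_of_mem_orderedSimplex {x : Fin m → ℝ} (hx : x ∈ orderedSimplex m) :
    StrictAnti (bordered 1 x 0) :=
  strictAnti_bordered (strictAnti_of_mem_orderedSimplex hx) one_pos (fun i ↦ (hx.1 i).1)
    fun i ↦ (hx.1 i).2

lemma andersonKernel_eqOn_bordered {x : Fin m → ℝ} (hx : x ∈ orderedSimplex m) (α β γ : ℂ) :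
    EqOn (fun y ↦ andersonKernel α β γ (x, y))
      (fun y ↦ absVandermonde x *
        dixonAndersonIntegrand (bordered 1 x 0) (bordered (β + 1) (fun _ ↦ γ) (α + 1)) y)
      (interlacing (bordered 1 x 0)) :=
  fun y hy ↦ andersonKernel_eq_bordered α β γ ((mem_interlacingPairs_iff x y).2 ⟨hx, hy⟩).1.1

lemma integrableOn_andersonKernel_snd (hα : -1 < α.re) (hβ : -1 < β.re) (hγ : 0 < γ.re)
    {x : Fin m → ℝ} (hx : x ∈ orderedSimplex m) :
    IntegrableOn (fun y ↦ andersonKernel α β γ (x, y)) (interlacing (bordered 1 x 0)) := by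
  rw [integrableOn_congr_fun (andersonKernel_eqOn_bordered hx α β γ)
    (isOpen_interlacing _).measurableSet]
  exact (integrableOn_dixonAndersonIntegrand (strictAnti_bordered_of_mem_orderedSimplex hx)
    (re_bordered_pos hα hβ hγ)).const_mul _

lemma setIntegral_andersonKernel_snd (hα : -1 < α.re) (hβ : -1 < β.re) (hγ : 0 < γ.re)
    {x : Fin m → ℝ} (hx : x ∈ orderedSimplex m) :
    ∫ y in interlacing (bordered 1 x 0), andersonKernel α β γ (x, y) =
      multiBeta (bordered (β + 1) (fun _ : Fin m ↦ γ) (α + 1)) *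
        selbergIntegrand m (fun _ ↦ 1) (α + γ) (β + γ) γ x := by
  rw [setIntegral_congr_fun (isOpen_interlacing _).measurableSet
      (andersonKernel_eqOn_bordered hx α β γ), integral_const_mul,
    integral_dixonAndersonIntegrand (strictAnti_bordered_of_mem_orderedSimplex hx)
      (re_bordered_pos hα hβ hγ), ← absVandermonde_mul_dixonAndersonFactor_bordered α β γ hx]
  ring

lemma ofReal_setIntegral_norm_andersonKernel_snd (hα : -1 < α.re) (hβ : -1 < β.re) (hγ : 0 < γ.re)
    {x : Fin m → ℝ} (hx : x ∈ orderedSimplex m) :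
    ((∫ y in interlacing (bordered 1 x 0), ‖andersonKernel α β γ (x, y)‖ : ℝ) : ℂ) =
      multiBeta (bordered (β.re + 1 : ℂ) (fun _ : Fin m ↦ (γ.re : ℂ)) (α.re + 1)) *
        selbergIntegrand m (fun _ ↦ 1) (α.re + γ.re) (β.re + γ.re) γ.re x := by
  rw [← setIntegral_andersonKernel_snd (by simpa) (by simpa) (by simpa) hx,
    ← integral_complex_ofReal]
  exact setIntegral_congr_fun (isOpen_interlacing _).measurableSet fun y hy ↦
    ofReal_norm_andersonKernel α β γ ((mem_interlacingPairs_iff x y).2 ⟨hx, hy⟩)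

lemma integrableOn_andersonKernel (hα : -1 < α.re) (hβ : -1 < β.re) (hγ : 0 < γ.re)
    (hS : IntegrableOn (selbergIntegrand m (fun _ ↦ 1) (α.re + γ.re) (β.re + γ.re) γ.re)
      (orderedSimplex m)) :
    IntegrableOn (andersonKernel α β γ) (interlacingPairs m) (volume.prod volume) := by
  have hsimplex := (isOpen_orderedSimplex m).measurableSet
  refine integrableOn_of_sections (isOpen_interlacingPairs m).measurableSet
    mem_interlacingPairs_iff hsimplex (fun _ ↦ (isOpen_interlacing _).measurableSet)
    (measurable_andersonKernel α β γ).aestronglyMeasurable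
    (fun x hx ↦ integrableOn_andersonKernel_snd hα hβ hγ hx) ?_
  have hofReal := (integrableOn_congr_fun
    (fun x hx ↦ ofReal_setIntegral_norm_andersonKernel_snd hα hβ hγ hx) hsimplex).2
    (hS.const_mul _)
  exact hofReal.re

lemma integrableOn_selbergIntegrand_succ (hγ : 0 < γ.re)
    (hK : IntegrableOn (andersonKernel α β γ) (interlacingPairs m) (volume.prod volume)) :
    IntegrableOn (selbergIntegrand (m + 1) (fun _ ↦ 1) α β γ) (orderedSimplex (m + 1)) := by
  have hsimplex := (isOpen_orderedSimplex (m + 1)).measurableSet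
  have hmarginal : IntegrableOn (fun y ↦ ∫ x in interlacing y, andersonKernel α β γ (x, y))
      (orderedSimplex (m + 1)) :=
    integrableOn_integral_section
      (measurable_swap (isOpen_interlacingPairs m).measurableSet) (fun _ _ ↦ Iff.rfl) hsimplex
      (fun y ↦ (isOpen_interlacing y).measurableSet) (integrableOn_comp_swap_iff.2 hK)
  rw [integrableOn_congr_fun (fun y hy ↦ setIntegral_andersonKernel_fst α β hγ hy) hsimplex]
    at hmarginal
  exact (integrable_const_mul_iff (IsUnit.mk0 _ (multiBeta_ne_zero fun _ ↦ hγ)) _).1 hmarginal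

theorem multiBeta_mul_selbergS_succ (hα : -1 < α.re) (hβ : -1 < β.re) (hγ : 0 < γ.re)
    (hK : IntegrableOn (andersonKernel α β γ) (interlacingPairs m) (volume.prod volume)) :
    multiBeta (fun _ : Fin (m + 1) ↦ γ) * selbergS (m + 1) (fun _ ↦ 1) α β γ =
      multiBeta (bordered (β + 1) (fun _ : Fin m ↦ γ) (α + 1)) *
        selbergS m (fun _ ↦ 1) (α + γ) (β + γ) γ := by
  have hswap := integral_integral_swap_of_sections (isOpen_interlacingPairs m).measurableSet
    mem_interlacingPairs_iff (fun _ _ ↦ Iff.rfl) (isOpen_orderedSimplex m).measurableSet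
    (fun _ ↦ (isOpen_interlacing _).measurableSet) (isOpen_orderedSimplex (m + 1)).measurableSet
    (fun y ↦ (isOpen_interlacing y).measurableSet) hK
  rw [setIntegral_congr_fun (isOpen_orderedSimplex m).measurableSet
      fun x hx ↦ setIntegral_andersonKernel_snd hα hβ hγ hx,
    setIntegral_congr_fun (isOpen_orderedSimplex (m + 1)).measurableSet
      fun y hy ↦ setIntegral_andersonKernel_fst α β hγ hy,
    integral_const_mul, integral_const_mul] at hswap
  exact hswap.symm

end SelbergRecursion

section ClosedForm

variable {α β γ : ℂ}

lemma selbergIntegrand_zero (f : (Fin 0 → ℝ) → ℂ) (α β γ : ℂ) :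
    selbergIntegrand 0 f α β γ = f := by
  ext
  simp [selbergIntegrand]

lemma orderedSimplex_zero : orderedSimplex 0 = Set.univ := by
  simp [orderedSimplex]

lemma selbergS_zero (f : (Fin 0 → ℝ) → ℂ) (α β γ : ℂ) : selbergS 0 f α β γ = f 0 := by
  rw [selbergS, selbergIntegrand_zero, orderedSimplex_zero, setIntegral_univ, volume_pi,
    Measure.pi_of_empty _ 0, integral_dirac]

theorem integrableOn_selbergIntegrand (n : ℕ) (hα : -1 < α.re) (hβ : -1 < β.re) (hγ : 0 < γ.re) :
    IntegrableOn (selbergIntegrand n (fun _ ↦ 1) α β γ) (orderedSimplex n) := by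
  induction n generalizing α β γ with
  | zero =>
    rw [selbergIntegrand_zero, IntegrableOn, volume_pi, Measure.pi_of_empty _ 0]
    exact integrable_const _
  | succ m ih =>
    refine integrableOn_selbergIntegrand_succ hγ
      (integrableOn_andersonKernel hα hβ hγ (ih ?_ ?_ ?_))
    all_goals simp only [add_re, ofReal_re]; linarith

lemma multiBeta_const (n : ℕ) (γ : ℂ) :
    multiBeta (fun _ : Fin n ↦ γ) = Gamma γ ^ n / Gamma (n * γ) := by
  simp [multiBeta]

lemma multiBeta_bordered_const (m : ℕ) (b c γ : ℂ) :
    multiBeta (bordered b (fun _ : Fin m ↦ γ) c) =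
      Gamma b * (Gamma γ ^ m * Gamma c) / Gamma (b + (m * γ + c)) := by
  simp [multiBeta, prod_univ_succ_castSucc, sum_univ_succ_castSucc]

/-- Selberg's product with the factorial absorbed by `Γ(1 + iγ) = iγ Γ(iγ)`; the index `i` starts
from `0`. -/
def selbergProduct (n : ℕ) (α β γ : ℂ) : ℂ :=
  ∏ i ∈ Finset.range n, Gamma ((i + 1 : ℕ) * γ) / Gamma γ *
    (Gamma (1 + α + i * γ) * Gamma (1 + β + i * γ) / Gamma (2 + α + β + (n + i - 1) * γ))

lemma selbergProduct_succ (m : ℕ) (α β γ : ℂ) :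
    selbergProduct (m + 1) α β γ = Gamma ((m + 1 : ℕ) * γ) / Gamma γ *
      (Gamma (1 + α) * Gamma (1 + β) / Gamma (2 + α + β + m * γ)) *
        selbergProduct m (α + γ) (β + γ) γ := by
  have hshift (δ : ℂ) (i : ℕ) : 1 + δ + (i + 1 : ℕ) * γ = 1 + (δ + γ) + i * γ := by
    push_cast
    ring
  have hshift' (i : ℕ) : 2 + α + β + ((m + 1 : ℕ) + (i + 1 : ℕ) - 1) * γ =
      2 + (α + γ) + (β + γ) + (m + i - 1) * γ := by
    push_cast
    ring
  have hzero : ((m + 1 : ℕ) : ℂ) - 1 = m := by simp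
  rw [selbergProduct, selbergProduct, Finset.prod_mul_distrib, Finset.prod_mul_distrib,
    Finset.prod_range_succ, Finset.prod_range_succ' _ m]
  simp only [hshift, hshift', hzero, Nat.cast_zero, zero_mul, add_zero]
  ring

theorem selbergS_eq_selbergProduct (n : ℕ) (hα : -1 < α.re) (hβ : -1 < β.re) (hγ : 0 < γ.re) :
    selbergS n (fun _ ↦ 1) α β γ = selbergProduct n α β γ := by
  induction n generalizing α β with
  | zero => rw [selbergS_zero, selbergProduct, Finset.prod_range_zero]
  | succ m ih =>
    have hconst : multiBeta (fun _ : Fin (m + 1) ↦ γ) ≠ 0 := multiBeta_ne_zero fun _ ↦ hγ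
    have hK : IntegrableOn (andersonKernel α β γ) (interlacingPairs m) (volume.prod volume) := by
      refine integrableOn_andersonKernel hα hβ hγ (integrableOn_selbergIntegrand m ?_ ?_ ?_)
      all_goals simp only [add_re, ofReal_re]; linarith
    have hrec := multiBeta_mul_selbergS_succ hα hβ hγ hK
    rw [ih (by rw [add_re]; linarith) (by rw [add_re]; linarith), multiBeta_bordered_const,
      show β + 1 + (m * γ + (α + 1)) = 2 + α + β + m * γ by ring,
      add_comm β 1, add_comm α 1] at hrec
    refine mul_left_cancel₀ hconst (hrec.trans ?_)
    obtain ⟨-, hG⟩ := div_ne_zero_iff.1 (multiBeta_const (m + 1) γ ▸ hconst)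
    have hGamma : Gamma γ ≠ 0 := Gamma_ne_zero_of_re_pos hγ
    rw [multiBeta_const, selbergProduct_succ, pow_succ]
    generalize Gamma ((m + 1 : ℕ) * γ) = G at *
    field_simp

lemma Gamma_one_add_mul_div (hγ : γ ≠ 0) {k : ℕ} (hk : k ≠ 0) :
    Gamma (1 + k * γ) / Gamma (1 + γ) = k * (Gamma (k * γ) / Gamma γ) := by
  rw [add_comm, add_comm 1, Gamma_add_one _ (mul_ne_zero (Nat.cast_ne_zero.2 hk) hγ),
    Gamma_add_one _ hγ]
  field_simp

lemma selbergProduct_eq_prod_Icc (n : ℕ) (α β : ℂ) (hγ : γ ≠ 0) :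
    selbergProduct n α β γ = (1 / (n.factorial : ℂ)) *
      ∏ i ∈ Finset.Icc 1 n, Gamma (1 + i * γ) * Gamma (1 + α + (i - 1) * γ) *
        Gamma (1 + β + (i - 1) * γ) /
          (Gamma (1 + γ) * Gamma (2 + α + β + (n + i - 2) * γ)) := by
  have hfactor (i : ℕ) : Gamma (1 + (i + 1 : ℕ) * γ) * Gamma (1 + α + ((i + 1 : ℕ) - 1) * γ) *
      Gamma (1 + β + ((i + 1 : ℕ) - 1) * γ) /
        (Gamma (1 + γ) * Gamma (2 + α + β + (n + (i + 1 : ℕ) - 2) * γ)) =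
      ((i + 1 : ℕ) : ℂ) * (Gamma ((i + 1 : ℕ) * γ) / Gamma γ *
        (Gamma (1 + α + i * γ) * Gamma (1 + β + i * γ) /
          Gamma (2 + α + β + (n + i - 1) * γ))) := by
    rw [← mul_assoc, ← Gamma_one_add_mul_div hγ i.succ_ne_zero,
      show ((i + 1 : ℕ) : ℂ) - 1 = i by simp,
      show (n + (i + 1 : ℕ) - 2 : ℂ) = n + i - 1 by push_cast; ring]
    ring
  have hfactorial : (n.factorial : ℂ) ≠ 0 := Nat.cast_ne_zero.2 n.factorial_ne_zero
  rw [← Finset.Ico_add_one_right_eq_Icc, Finset.prod_Ico_eq_prod_range, Nat.add_sub_cancel]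
  simp only [add_comm 1 (_ : ℕ), hfactor]
  rw [Finset.prod_mul_distrib, ← Nat.cast_prod, Finset.prod_range_add_one_eq_factorial,
    one_div, inv_mul_cancel_left₀ hfactorial, selbergProduct]

end ClosedForm

/-- Selberg's evaluation: for `Re α > −1`, `Re β > −1`, `Re γ > 0` the Selberg integral
converges absolutely and equals the product of Gamma factors. -/
theorem selberg_integral_converges_and_eq (n : ℕ) (hn : 1 ≤ n) (α β γ : ℂ)
    (hα : -1 < α.re) (hβ : -1 < β.re) (hγ : 0 < γ.re) :
    IntegrableOn (selbergIntegrand n (fun _ => 1) α β γ) (orderedSimplex n) volume ∧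
    selbergS n (fun _ => 1) α β γ =
      (1 / (n.factorial : ℂ)) *
        ∏ i ∈ Finset.Icc 1 n,
          Complex.Gamma (1 + (i : ℂ) * γ) * Complex.Gamma (1 + α + ((i : ℂ) - 1) * γ) *
              Complex.Gamma (1 + β + ((i : ℂ) - 1) * γ) /
            (Complex.Gamma (1 + γ) *
              Complex.Gamma (2 + α + β + ((n : ℂ) + (i : ℂ) - 2) * γ)) := by
  have hγ₀ : γ ≠ 0 := by
    rintro rfl
    simp at hγ
  exact ⟨integrableOn_selbergIntegrand n hα hβ hγ,
    (selbergS_eq_selbergProduct n hα hβ hγ).trans (selbergProduct_eq_prod_Icc n α β hγ₀)⟩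

end
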